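/- Let μ be a determinate measure on ℝ with all moments finite and infinite support, such that supp(μ) ⊆ [0,∞). Then for each k ∈ {0, 1, 2}, the polynomials are dense in L²(x^k·μ), where x^k·μ denotes the measure with density x ↦ x^k with respect to μ (i.e., the density index of μ satisfies δ(μ) ≥ 2). -/

import Mathlib

open MeasureTheory Polynomial Filter

noncomputable section

/-- A measure on `ℝ` has all moments finite. -/
def HasAllMoments (μ : Measure ℝ) : Prop :=
  ∀ n : ℕ, Integrable (fun x : ℝ => |x| ^ n) μ

/-- The (topological) support of a measure on `ℝ`: points all of whose
neighborhoods have positive measure. -/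
def mSupp (μ : Measure ℝ) : Set ℝ :=
  {x : ℝ | ∀ U ∈ nhds x, μ U ≠ 0}

/-- A measure with all moments finite is determinate if it is the unique measure
with all moments finite having its moment sequence. -/
def IsDeterminate (μ : Measure ℝ) : Prop :=
  ∀ ν : Measure ℝ, HasAllMoments ν →
    (∀ n : ℕ, ∫ x, x ^ n ∂ν = ∫ x, x ^ n ∂μ) → ν = μ

/-- The complex polynomial functions are dense in `L²(ν)`. -/
def PolyDense (ν : Measure ℝ) : Prop :=
  Dense {f : Lp ℂ 2 ν | ∃ p : Polynomial ℂ, ⇑f =ᵐ[ν] fun x : ℝ => p.eval (x : ℂ)}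

/-!
M. Riesz's argument. The extremal positive extensions of the moment functional to the continuous
polynomially bounded functions, given by Hahn–Banach, are all represented by measures with the
moments of `μ`, hence by `μ` itself. So there are polynomials `q₁ ≤ 1 / (1 + x²) ≤ q₂` with
`∫ (q₂ - q₁) dμ` arbitrarily small.

Write the nonnegative polynomials `1 - (1 + x²) q₁` and `(1 + x²) q₂ - 1` as `|r|²` and `|s|²` on
the real line. At `±i` both are known exactly, so if `r - c s` vanishes at `i`, the quotient
`(r - c s) / (x - i)` is bounded below at `-i`, while its norm in `L²(μ)` is controlled by
`∫ (q₂ - q₁) dμ`. Normalising it to a polynomial `p` with `p(-i) = 1`, the polynomial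
`(1 - p) / (x + i)` is close to `1 / (x + i)` in `L²((1 + x²) μ)`.

Consequently the annihilator of the polynomials in `L²(ν)`, for every `ν ≤ (1 + x²) μ`, is stable
under multiplication by `1 / (x + i)` and under conjugation, and these generate a point-separating
star algebra of bounded continuous functions, which forces the annihilator to vanish.
-/

section HermitianSquares

lemma eval_nonneg_of_mul_eval_nonneg {m t : ℝ[X]} (hm0 : m ≠ 0) (hm : ∀ x, 0 ≤ m.eval x)
    (hmt : ∀ x, 0 ≤ (m * t).eval x) (x : ℝ) : 0 ≤ t.eval x := by
  have hroots : {x | m.IsRoot x}.Countable := (finite_setOfPred_isRoot hm0).countable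
  have hdense : Dense {x | m.IsRoot x}ᶜ := hroots.dense_compl ℝ
  refine hdense.induction (fun y hy => ?_) (isClosed_le continuous_const t.continuous) x
  have hmty := hmt y
  rw [eval_mul] at hmty
  exact nonneg_of_mul_nonneg_right hmty ((hm y).lt_of_ne' hy)

lemma sq_X_sub_C_dvd_of_nonneg {q : ℝ[X]} (hq : ∀ x, 0 ≤ q.eval x) {a : ℝ} (ha : q.IsRoot a) :
    (X - C a) ^ 2 ∣ q := by
  rcases eq_or_ne q 0 with rfl | hq0
  · exact dvd_zero _
  have hmin : IsLocalMin (fun x => q.eval x) a := .of_forall fun x => ha.eq_zero.trans_le (hq x)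
  have hderiv : q.derivative.IsRoot a := hmin.hasDerivAt_eq_zero (q.hasDerivAt a)
  exact (le_rootMultiplicity_iff hq0).1 ((one_lt_rootMultiplicity_iff_isRoot hq0).2 ⟨ha, hderiv⟩)

lemma map_quadratic_eq_mul_conj (z : ℂ) :
    (X ^ 2 - C (2 * z.re) * X + C (‖z‖ ^ 2) : ℝ[X]).map (algebraMap ℝ ℂ) =
      (X - C z) * (X - C (starRingEnd ℂ z)) := by
  have hsum : (C ((2 * z.re : ℝ) : ℂ) : ℂ[X]) = C z + C (starRingEnd ℂ z) := by
    rw [← C_add, Complex.add_conj]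
  have hprod : (C ((‖z‖ ^ 2 : ℝ) : ℂ) : ℂ[X]) = C z * C (starRingEnd ℂ z) := by
    rw [← C_mul, Complex.mul_conj, Complex.normSq_eq_norm_sq]
  simp only [Polynomial.map_add, Polynomial.map_sub, Polynomial.map_mul, Polynomial.map_pow,
    map_X, map_C, Complex.coe_algebraMap, hsum, hprod]
  ring

lemma quadratic_dvd_of_nonneg {q : ℝ[X]} (hq : ∀ x, 0 ≤ q.eval x) {z : ℂ} (hz : aeval z q = 0) :
    X ^ 2 - C (2 * z.re) * X + C (‖z‖ ^ 2) ∣ q := by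
  by_cases him : z.im = 0
  · obtain ⟨a, rfl⟩ : ∃ a : ℝ, z = a := ⟨z.re, Complex.ext rfl him⟩
    have ha : q.IsRoot a := by
      rw [← Complex.coe_algebraMap, aeval_algebraMap_apply, Complex.coe_algebraMap] at hz
      simpa using hz
    convert sq_X_sub_C_dvd_of_nonneg hq ha using 1
    simp only [Complex.ofReal_re, Complex.norm_real, Real.norm_eq_abs, sq_abs, C_mul, C_pow,
      C_ofNat]
    ring
  · exact quadratic_dvd_of_aeval_eq_zero_im_ne_zero q hz him

lemma exists_map_eq_mul_map_conj {q : ℝ[X]} (hq : ∀ x, 0 ≤ q.eval x) :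
    ∃ r : ℂ[X], q.map (algebraMap ℝ ℂ) = r * r.map (starRingEnd ℂ) := by
  induction hn : q.natDegree using Nat.strong_induction_on generalizing q with
  | _ n ih =>
    by_cases hdeg : q.natDegree = 0
    · obtain ⟨c, rfl⟩ := natDegree_eq_zero.1 hdeg
      have hc : 0 ≤ c := by simpa using hq 0
      refine ⟨C (√c : ℂ), ?_⟩
      simp only [map_C, ← C_mul, Complex.conj_ofReal, ← Complex.ofReal_mul, Real.mul_self_sqrt hc,
        Complex.coe_algebraMap]
    obtain ⟨z, hz⟩ := Complex.exists_root (f := q.map (algebraMap ℝ ℂ)) <| by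
      rw [degree_map]
      exact natDegree_pos_iff_degree_pos.1 (Nat.pos_of_ne_zero hdeg)
    rw [IsRoot, eval_map_algebraMap] at hz
    obtain ⟨t, ht⟩ := quadratic_dvd_of_nonneg hq hz
    set m : ℝ[X] := X ^ 2 - C (2 * z.re) * X + C (‖z‖ ^ 2) with hm
    have hm_degree : m.natDegree = 2 := by rw [hm]; compute_degree!
    have hm_ne : m ≠ 0 := ne_zero_of_natDegree_gt (hm_degree ▸ two_pos)
    have ht_ne : t ≠ 0 := by
      rintro rfl
      simp [ht] at hdeg
    have hm_nonneg (x : ℝ) : 0 ≤ m.eval x := by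
      have hre : z.re ^ 2 ≤ ‖z‖ ^ 2 := sq_le_sq.2 (by simpa using Complex.abs_re_le_norm z)
      simp only [hm, eval_add, eval_sub, eval_mul, eval_pow, eval_X, eval_C]
      nlinarith [sq_nonneg (x - z.re)]
    have ht_degree : t.natDegree < n := by
      rw [← hn, ht, natDegree_mul hm_ne ht_ne, hm_degree]
      lia
    obtain ⟨r, hr⟩ := ih _ ht_degree
      (eval_nonneg_of_mul_eval_nonneg hm_ne hm_nonneg (ht ▸ hq)) rfl
    refine ⟨(X - C z) * r, ?_⟩
    rw [ht, Polynomial.map_mul, hr, hm, map_quadratic_eq_mul_conj]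
    simp only [Polynomial.map_mul, Polynomial.map_sub, map_X, map_C]
    ring

lemma eval_map_conj (p : ℂ[X]) (z : ℂ) :
    (p.map (starRingEnd ℂ)).eval z = starRingEnd ℂ (p.eval (starRingEnd ℂ z)) := by
  simpa using eval_map_apply (p := p) (starRingEnd ℂ) (starRingEnd ℂ z)

lemma eval_mul_conj_eval_conj {q : ℝ[X]} {r : ℂ[X]}
    (hr : q.map (algebraMap ℝ ℂ) = r * r.map (starRingEnd ℂ)) (z : ℂ) :
    r.eval z * starRingEnd ℂ (r.eval (starRingEnd ℂ z)) = aeval z q := by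
  rw [← eval_map_algebraMap, hr, eval_mul, eval_map_conj]

lemma norm_sq_eval_ofReal_of_map_eq {q : ℝ[X]} {r : ℂ[X]}
    (hr : q.map (algebraMap ℝ ℂ) = r * r.map (starRingEnd ℂ)) (x : ℝ) :
    ‖r.eval (x : ℂ)‖ ^ 2 = q.eval x := by
  have hx := congrArg (eval (x : ℂ)) hr
  rw [eval_mul, eval_map_conj, Complex.conj_ofReal, Complex.mul_conj, Complex.normSq_eq_norm_sq,
    ← Complex.coe_algebraMap, eval_map_apply] at hx
  exact (Complex.ofReal_injective hx).symm

lemma exists_map_eq_mul_map_conj_norm_eval_le {q : ℝ[X]} (hq : ∀ x, 0 ≤ q.eval x) (z : ℂ) :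
    ∃ r : ℂ[X], q.map (algebraMap ℝ ℂ) = r * r.map (starRingEnd ℂ) ∧
      ‖r.eval z‖ ≤ ‖r.eval (starRingEnd ℂ z)‖ := by
  obtain ⟨r, hr⟩ := exists_map_eq_mul_map_conj hq
  rcases le_total ‖r.eval z‖ ‖r.eval (starRingEnd ℂ z)‖ with hle | hle
  · exact ⟨r, hr, hle⟩
  · refine ⟨r.map (starRingEnd ℂ), ?_, ?_⟩
    · have hinv : (starRingEnd ℂ).comp (starRingEnd ℂ) = RingHom.id ℂ := by ext; simp
      rw [hr, Polynomial.map_map, hinv, Polynomial.map_id, mul_comm]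
    · simpa [eval_map_conj] using hle

end HermitianSquares

section Sandwich

lemma norm_sub_mul_sq_le {𝕜 : Type*} [NormedField 𝕜] (u v c : 𝕜) :
    ‖u - c * v‖ ^ 2 ≤ (1 + ‖c‖ ^ 2) * (‖u‖ ^ 2 + ‖v‖ ^ 2) := by
  have htri : ‖u - c * v‖ ≤ ‖u‖ + ‖c‖ * ‖v‖ := norm_mul c v ▸ norm_sub_le u (c * v)
  calc ‖u - c * v‖ ^ 2 ≤ (‖u‖ + ‖c‖ * ‖v‖) ^ 2 := by gcongr
    _ ≤ (1 + ‖c‖ ^ 2) * (‖u‖ ^ 2 + ‖v‖ ^ 2) := by nlinarith [sq_nonneg (‖v‖ - ‖c‖ * ‖u‖)]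

lemma norm_ofReal_sub_sq (x : ℝ) (z : ℂ) : ‖(x : ℂ) - z‖ ^ 2 = (x - z.re) ^ 2 + z.im ^ 2 := by
  rw [← Complex.normSq_eq_norm_sq, Complex.normSq_apply, Complex.sub_re, Complex.sub_im,
    Complex.ofReal_re, Complex.ofReal_im]
  ring

lemma two_mul_norm_eval_mul_norm_eval_neg_I {p r s : ℂ[X]} {c : ℂ}
    (hr : r.eval Complex.I * starRingEnd ℂ (r.eval (-Complex.I)) = 1)
    (hs : s.eval Complex.I * starRingEnd ℂ (s.eval (-Complex.I)) = -1)
    (hc : r.eval Complex.I = c * s.eval Complex.I)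
    (hp : r - C c * s = (X - C Complex.I) * p) :
    2 * ‖r.eval Complex.I‖ * ‖p.eval (-Complex.I)‖ = 1 + ‖c‖ ^ 2 := by
  have hp_eval : r.eval (-Complex.I) - c * s.eval (-Complex.I) =
      (-Complex.I - Complex.I) * p.eval (-Complex.I) := by
    simpa using congrArg (eval (-Complex.I)) hp
  have hr' := congrArg (starRingEnd ℂ) hr
  have hs' := congrArg (starRingEnd ℂ) hs
  simp only [map_mul, Complex.conj_conj, map_one, map_neg] at hr' hs'
  have hidentity : starRingEnd ℂ (r.eval Complex.I) *
      ((-Complex.I - Complex.I) * p.eval (-Complex.I)) = ((1 + ‖c‖ ^ 2 : ℝ) : ℂ) := by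
    rw [← hp_eval, mul_sub, hr', hc, map_mul, ← Complex.normSq_eq_norm_sq, Complex.ofReal_add,
      Complex.ofReal_one, Complex.normSq_eq_conj_mul_self]
    linear_combination -(starRingEnd ℂ c * c) * hs'
  have hnorm := congrArg norm hidentity
  have htwo : ‖-Complex.I - Complex.I‖ = 2 := by
    rw [← neg_add', norm_neg, ← two_mul, norm_mul, Complex.norm_I, mul_one, Complex.norm_two]
  rw [norm_mul, norm_mul, htwo, RCLike.norm_conj, Complex.norm_real,
    Real.norm_of_nonneg (by positivity)] at hnorm
  linarith

lemma exists_norm_sq_eval_le_and_norm_eval_neg_I_ge {r s : ℂ[X]}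
    (hr : r.eval Complex.I * starRingEnd ℂ (r.eval (-Complex.I)) = 1)
    (hs : s.eval Complex.I * starRingEnd ℂ (s.eval (-Complex.I)) = -1)
    (hr_le : ‖r.eval Complex.I‖ ≤ 1) :
    ∃ (p : ℂ[X]) (K : ℝ), 1 ≤ K ∧ K ≤ 2 * ‖p.eval (-Complex.I)‖ ∧ ∀ x : ℝ,
      (1 + x ^ 2) * ‖p.eval (x : ℂ)‖ ^ 2 ≤ K * (‖r.eval (x : ℂ)‖ ^ 2 + ‖s.eval (x : ℂ)‖ ^ 2) := by
  have hs_ne : s.eval Complex.I ≠ 0 := left_ne_zero_of_mul (hs ▸ neg_ne_zero.2 one_ne_zero)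
  obtain ⟨c, hc⟩ : ∃ c, r.eval Complex.I = c * s.eval Complex.I :=
    ⟨_, (div_mul_cancel₀ _ hs_ne).symm⟩
  obtain ⟨p, hp⟩ : X - C Complex.I ∣ r - C c * s := dvd_iff_isRoot.2 (by simp [hc])
  refine ⟨p, 1 + ‖c‖ ^ 2, by simp, ?_, fun x => ?_⟩
  · rw [← two_mul_norm_eval_mul_norm_eval_neg_I hr hs hc hp]
    nlinarith [norm_nonneg (p.eval (-Complex.I))]
  · have hpx : r.eval (x : ℂ) - c * s.eval (x : ℂ) = ((x : ℂ) - Complex.I) * p.eval (x : ℂ) := by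
      simpa using congrArg (eval (x : ℂ)) hp
    have hnorm : 1 + x ^ 2 = ‖(x : ℂ) - Complex.I‖ ^ 2 := by simp [norm_ofReal_sub_sq, add_comm]
    rw [hnorm, ← mul_pow, ← norm_mul, ← hpx]
    exact norm_sub_mul_sq_le _ _ c

lemma exists_hermitian_factors_of_sandwich {q₁ q₂ : ℝ[X]}
    (hq₁ : ∀ x : ℝ, q₁.eval x ≤ (1 + x ^ 2)⁻¹) (hq₂ : ∀ x : ℝ, (1 + x ^ 2)⁻¹ ≤ q₂.eval x) :
    ∃ r s : ℂ[X], r.eval Complex.I * starRingEnd ℂ (r.eval (-Complex.I)) = 1 ∧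
      s.eval Complex.I * starRingEnd ℂ (s.eval (-Complex.I)) = -1 ∧ ‖r.eval Complex.I‖ ≤ 1 ∧
      ∀ x : ℝ, ‖r.eval (x : ℂ)‖ ^ 2 + ‖s.eval (x : ℂ)‖ ^ 2 =
        (1 + x ^ 2) * (q₂.eval x - q₁.eval x) := by
  have hlower (x : ℝ) : 0 ≤ (1 - (1 + X ^ 2) * q₁).eval x := by
    have hx := mul_le_mul_of_nonneg_left (hq₁ x) (by positivity : 0 ≤ 1 + x ^ 2)
    rw [mul_inv_cancel₀ (by positivity)] at hx
    simpa using hx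
  have hupper (x : ℝ) : 0 ≤ ((1 + X ^ 2) * q₂ - 1).eval x := by
    have hx := mul_le_mul_of_nonneg_left (hq₂ x) (by positivity : 0 ≤ 1 + x ^ 2)
    rw [mul_inv_cancel₀ (by positivity)] at hx
    simpa using hx
  obtain ⟨r, hr, hr_le⟩ := exists_map_eq_mul_map_conj_norm_eval_le hlower Complex.I
  obtain ⟨s, hs⟩ := exists_map_eq_mul_map_conj hupper
  have hrI : r.eval Complex.I * starRingEnd ℂ (r.eval (-Complex.I)) = 1 := by
    simpa using eval_mul_conj_eval_conj hr Complex.I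
  refine ⟨r, s, hrI, by simpa using eval_mul_conj_eval_conj hs Complex.I, ?_, fun x => ?_⟩
  · have hprod := congrArg norm hrI
    rw [norm_mul, RCLike.norm_conj, norm_one] at hprod
    rw [Complex.conj_I] at hr_le
    nlinarith [norm_nonneg (r.eval Complex.I)]
  · rw [norm_sq_eval_ofReal_of_map_eq hr, norm_sq_eval_ofReal_of_map_eq hs]
    simp only [eval_sub, eval_mul, eval_add, eval_pow, eval_X, eval_one]
    ring

lemma exists_eval_neg_I_eq_one_norm_sq_eval_le {q₁ q₂ : ℝ[X]}
    (hq₁ : ∀ x : ℝ, q₁.eval x ≤ (1 + x ^ 2)⁻¹) (hq₂ : ∀ x : ℝ, (1 + x ^ 2)⁻¹ ≤ q₂.eval x) :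
    ∃ p : ℂ[X], p.eval (-Complex.I) = 1 ∧
      ∀ x : ℝ, ‖p.eval (x : ℂ)‖ ^ 2 ≤ 4 * (q₂.eval x - q₁.eval x) := by
  obtain ⟨r, s, hr, hs, hr_le, hrs⟩ := exists_hermitian_factors_of_sandwich hq₁ hq₂
  obtain ⟨p, K, hK, hpI, hp⟩ := exists_norm_sq_eval_le_and_norm_eval_neg_I_ge hr hs hr_le
  have hpI_pos : 0 < ‖p.eval (-Complex.I)‖ := by linarith
  refine ⟨C (p.eval (-Complex.I))⁻¹ * p, by simp [norm_pos_iff.1 hpI_pos], fun x => ?_⟩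
  have hgap : 0 ≤ q₂.eval x - q₁.eval x := sub_nonneg.2 ((hq₁ x).trans (hq₂ x))
  have hpx : ‖p.eval (x : ℂ)‖ ^ 2 ≤ K * (q₂.eval x - q₁.eval x) := by
    have hx := hp x
    rw [hrs, mul_left_comm] at hx
    exact le_of_mul_le_mul_left hx (by positivity)
  rw [eval_mul, eval_C, norm_mul, norm_inv, mul_pow, inv_pow, inv_mul_le_iff₀ (by positivity),
    ← mul_assoc]
  refine hpx.trans (mul_le_mul_of_nonneg_right ?_ hgap)
  nlinarith

end Sandwich

section PositiveExtension

lemma exists_linearMap_le_sublinear_eq {E : Type*} [AddCommGroup E] [Module ℝ E] {N : E → ℝ}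
    (N_hom : ∀ c : ℝ, 0 < c → ∀ f, N (c • f) = c * N f) (N_add : ∀ f g, N (f + g) ≤ N f + N g)
    (φ : E) : ∃ Λ : E →ₗ[ℝ] ℝ, (∀ f, Λ f ≤ N f) ∧ Λ φ = N φ := by
  have N_zero : N 0 = 0 := by
    have h := N_hom 2 two_pos 0
    rw [smul_zero] at h
    linarith
  have hker (c : ℝ) (hc : c • φ = 0) : c • N φ = 0 := by
    rcases smul_eq_zero.1 hc with rfl | rfl
    · exact zero_smul ℝ _
    · rw [N_zero, smul_zero]
  let f₀ : E →ₗ.[ℝ] ℝ := LinearPMap.mkSpanSingleton' φ (N φ) hker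
  have hf₀ (x : f₀.domain) : f₀ x ≤ N x := by
    obtain ⟨y, hy⟩ := x
    obtain ⟨c, rfl⟩ := Submodule.mem_span_singleton.1 hy
    simp only [f₀, LinearPMap.mkSpanSingleton'_apply, RingHom.id_apply, smul_eq_mul]
    rcases lt_trichotomy c 0 with hneg | rfl | hpos
    · have h := N_add (c • φ) (-c • φ)
      rw [← add_smul, add_neg_cancel, zero_smul, N_zero, N_hom (-c) (neg_pos.2 hneg)] at h
      linarith
    · rw [zero_mul, zero_smul, N_zero]
    · rw [N_hom c hpos]
  obtain ⟨Λ, hΛ_eq, hΛ_le⟩ := exists_extension_of_le_sublinear f₀ N N_hom N_add hf₀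
  refine ⟨Λ, hΛ_le, ?_⟩
  rw [hΛ_eq ⟨φ, Submodule.mem_span_singleton_self φ⟩]
  exact LinearPMap.mkSpanSingleton'_apply_self φ (N φ) hker _

variable {E F : Type*} [AddCommGroup E] [PartialOrder E] [Module ℝ E] [AddCommGroup F] [Module ℝ F]
  {T : F →ₗ[ℝ] E} {L : F →ₗ[ℝ] ℝ}

/-- The upper functional `f ↦ inf {L q | f ≤ T q}` attached to a functional `L` on a space `F`
mapped by `T` into an ordered space `E`. Being a real `sInf`, it is meaningful only when `L` is
positive and the image of `T` is cofinal in `E`. -/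
def upperFunctional (T : F →ₗ[ℝ] E) (L : F →ₗ[ℝ] ℝ) (f : E) : ℝ :=
  sInf (L '' {q | f ≤ T q})

open scoped Pointwise in
lemma upperFunctional_smul [PosSMulMono ℝ E] {c : ℝ} (hc : 0 < c) (f : E) :
    upperFunctional T L (c • f) = c * upperFunctional T L f := by
  have hmajorants : {q | c • f ≤ T q} = c • {q | f ≤ T q} := by
    ext q
    rw [Set.mem_smul_set_iff_inv_smul_mem₀ hc.ne', Set.mem_ofPred_eq, Set.mem_ofPred_eq, map_smul,
      le_inv_smul_iff_of_pos hc]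
  rw [upperFunctional, hmajorants, image_smul_set, Real.sInf_smul_of_nonneg hc.le,
    smul_eq_mul, upperFunctional]

variable [IsOrderedAddMonoid E]

lemma isGLB_upperFunctional (hL : ∀ q, 0 ≤ T q → 0 ≤ L q) (hT : ∀ f, ∃ q, f ≤ T q) (f : E) :
    IsGLB (L '' {q | f ≤ T q}) (upperFunctional T L f) := by
  obtain ⟨q₀, hq₀⟩ := hT f
  obtain ⟨q₁, hq₁⟩ := hT (-f)
  refine isGLB_csInf ⟨L q₀, q₀, hq₀, rfl⟩ ⟨-L q₁, ?_⟩
  rintro _ ⟨q, hq, rfl⟩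
  have hnonneg : 0 ≤ T (q + q₁) := by
    rw [map_add, ← add_neg_cancel f]
    exact add_le_add hq hq₁
  have h := hL _ hnonneg
  rw [map_add] at h
  linarith

lemma upperFunctional_add_le (hL : ∀ q, 0 ≤ T q → 0 ≤ L q) (hT : ∀ f, ∃ q, f ≤ T q) (f g : E) :
    upperFunctional T L (f + g) ≤ upperFunctional T L f + upperFunctional T L g := by
  rw [← sub_le_iff_le_add]
  refine (isGLB_upperFunctional hL hT f).2 ?_
  rintro _ ⟨p, hp, rfl⟩
  rw [sub_le_comm]
  refine (isGLB_upperFunctional hL hT g).2 ?_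
  rintro _ ⟨q, hq, rfl⟩
  rw [sub_le_iff_le_add', ← map_add]
  refine (isGLB_upperFunctional hL hT (f + g)).1 ⟨p + q, ?_, rfl⟩
  exact (add_le_add hp hq).trans_eq (map_add T p q).symm

lemma exists_positive_extension_isGLB [PosSMulMono ℝ E] (hL : ∀ q, 0 ≤ T q → 0 ≤ L q)
    (hT : ∀ f, ∃ q, f ≤ T q) (φ : E) :
    ∃ Λ : E →ₗ[ℝ] ℝ, (∀ f, 0 ≤ f → 0 ≤ Λ f) ∧ (∀ q, Λ (T q) = L q) ∧
      IsGLB (L '' {q | φ ≤ T q}) (Λ φ) := by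
  obtain ⟨Λ, hΛ_le, hΛ_eq⟩ := exists_linearMap_le_sublinear_eq
    (fun c hc => upperFunctional_smul (T := T) (L := L) hc) (upperFunctional_add_le hL hT) φ
  have hΛ_le_of_le {f : E} {q : F} (hfq : f ≤ T q) : Λ f ≤ L q :=
    (hΛ_le f).trans ((isGLB_upperFunctional hL hT f).1 ⟨q, hfq, rfl⟩)
  refine ⟨Λ, fun f hf => ?_, fun q => le_antisymm (hΛ_le_of_le le_rfl) ?_, ?_⟩
  · have h : Λ (-f) ≤ L 0 := hΛ_le_of_le (by rwa [map_zero, neg_nonpos])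
    rwa [map_neg, map_zero, neg_nonpos] at h
  · have h : Λ (-T q) ≤ L (-q) := hΛ_le_of_le (map_neg T q).ge
    rwa [map_neg, map_neg, neg_le_neg_iff] at h
  · rw [hΛ_eq]
    exact isGLB_upperFunctional hL hT φ

end PositiveExtension

section PolynomiallyBounded

lemma abs_le_one_add_sq (y : ℝ) : |y| ≤ 1 + y ^ 2 := by
  nlinarith [sq_abs y, sq_nonneg (|y| - 1)]

/-- The tent function of height one supported on `[-(n + 1), n + 1]`. -/
def tent (n : ℕ) (x : ℝ) : ℝ := max 0 (1 - |x| / (n + 1))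

lemma continuous_tent (n : ℕ) : Continuous (tent n) := by
  unfold tent
  fun_prop

lemma tent_nonneg (n : ℕ) (x : ℝ) : 0 ≤ tent n x := le_max_left _ _

lemma tent_le_one (n : ℕ) (x : ℝ) : tent n x ≤ 1 :=
  max_le zero_le_one (sub_le_self 1 (by positivity))

lemma one_sub_tent_le (n : ℕ) (x : ℝ) : 1 - tent n x ≤ |x| / (n + 1) :=
  sub_le_comm.1 (le_max_right _ _)

lemma hasCompactSupport_tent (n : ℕ) : HasCompactSupport (tent n) := by
  refine .intro (isCompact_closedBall (0 : ℝ) (n + 1)) fun x hx => max_eq_left ?_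
  rw [Metric.mem_closedBall, dist_zero_right, Real.norm_eq_abs, not_le] at hx
  rw [sub_nonpos, one_le_div₀ (by positivity)]
  exact hx.le

lemma tendsto_tent (x : ℝ) : Tendsto (fun n => tent n x) atTop (nhds 1) := by
  have hlower : Tendsto (fun n : ℕ => 1 - |x| / ((n : ℝ) + 1)) atTop (nhds 1) := by
    simpa [div_eq_mul_inv] using
      ((tendsto_one_div_add_atTop_nhds_zero_nat (𝕜 := ℝ)).const_mul |x|).const_sub 1
  exact tendsto_of_tendsto_of_tendsto_of_le_of_le hlower tendsto_const_nhds
    (fun _ => le_max_right _ _) fun n => tent_le_one n x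

/-- The space of continuous real functions on `ℝ` dominated by a polynomial. It contains both the
polynomials and the continuous functions with compact support. -/
def polyBounded : Submodule ℝ (ℝ → ℝ) where
  carrier := {f | Continuous f ∧ ∃ q : ℝ[X], ∀ x, |f x| ≤ q.eval x}
  zero_mem' := ⟨continuous_zero, 0, fun x => by simp⟩
  add_mem' := by
    rintro f g ⟨hf, p, hp⟩ ⟨hg, q, hq⟩
    refine ⟨hf.add hg, p + q, fun x => ?_⟩
    rw [eval_add]
    exact (abs_add_le _ _).trans (add_le_add (hp x) (hq x))
  smul_mem' := by
    rintro c f ⟨hf, p, hp⟩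
    refine ⟨hf.const_smul c, C |c| * p, fun x => ?_⟩
    rw [Pi.smul_apply, smul_eq_mul, abs_mul, eval_mul, eval_C]
    exact mul_le_mul_of_nonneg_left (hp x) (abs_nonneg c)

namespace polyBounded

instance : PosSMulMono ℝ polyBounded :=
  ⟨fun _ hc _ _ hfg x => mul_le_mul_of_nonneg_left (hfg x) hc⟩

/-- Polynomials as polynomially bounded functions. -/
def ofPolynomial : ℝ[X] →ₗ[ℝ] polyBounded where
  toFun q := ⟨fun x => q.eval x, q.continuous, 1 + q ^ 2, fun x => by
    simpa using abs_le_one_add_sq (q.eval x)⟩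
  map_add' p q := Subtype.ext <| funext fun _ => eval_add
  map_smul' c q := Subtype.ext <| funext fun _ => eval_smul c q _

/-- Continuous functions with compact support as polynomially bounded functions. -/
def ofCompactlySupported : CompactlySupportedContinuousMap ℝ ℝ →ₗ[ℝ] polyBounded where
  toFun g := ⟨g, g.continuous, by
    obtain ⟨M, hM⟩ := g.continuous.bounded_above_of_compact_support g.hasCompactSupport
    exact ⟨C M, fun x => by simpa using hM x⟩⟩
  map_add' _ _ := rfl
  map_smul' _ _ := rfl

lemma exists_le_ofPolynomial (f : polyBounded) : ∃ q, f ≤ ofPolynomial q := by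
  obtain ⟨q, hq⟩ := f.2.2
  exact ⟨q, fun x => (le_abs_self _).trans (hq x)⟩

/-- The cutoff of a polynomially bounded function by a tent function. -/
def truncate (f : polyBounded) (n : ℕ) : CompactlySupportedContinuousMap ℝ ℝ where
  toFun x := f.1 x * tent n x
  continuous_toFun := f.2.1.mul (continuous_tent n)
  hasCompactSupport' := (hasCompactSupport_tent n).mul_left

lemma truncate_apply (f : polyBounded) (n : ℕ) (x : ℝ) : truncate f n x = f.1 x * tent n x := rfl

lemma tendsto_truncate (f : polyBounded) (x : ℝ) :
    Tendsto (fun n => truncate f n x) atTop (nhds (f.1 x)) := by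
  simpa [truncate_apply] using (tendsto_tent x).const_mul (f.1 x)

lemma abs_truncate_le (f : polyBounded) (n : ℕ) (x : ℝ) :
    |truncate f n x| ≤ |f.1 x| := by
  rw [truncate_apply, abs_mul, abs_of_nonneg (tent_nonneg n x)]
  exact mul_le_of_le_one_right (abs_nonneg _) (tent_le_one n x)

lemma abs_truncate_sub_le (f : polyBounded) (n : ℕ) (x : ℝ) :
    |truncate f n x - f.1 x| ≤ 1 / (n + 1) * (|f.1 x| * (1 + x ^ 2)) := by
  have htent : |tent n x - 1| = 1 - tent n x := by
    rw [abs_sub_comm, abs_of_nonneg (sub_nonneg.2 (tent_le_one n x))]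
  calc |truncate f n x - f.1 x| = |f.1 x| * (1 - tent n x) := by
        rw [truncate_apply, ← mul_sub_one, abs_mul, htent]
    _ ≤ |f.1 x| * ((1 + x ^ 2) / (n + 1)) := by
        gcongr
        exact (one_sub_tent_le n x).trans (by gcongr; exact abs_le_one_add_sq x)
    _ = 1 / (n + 1) * (|f.1 x| * (1 + x ^ 2)) := by ring

variable {Λ : polyBounded →ₗ[ℝ] ℝ}

lemma map_le_map (hΛ : ∀ f, 0 ≤ f → 0 ≤ Λ f) {f g : polyBounded} (hfg : f ≤ g) :
    Λ f ≤ Λ g := by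
  simpa using hΛ _ (sub_nonneg.2 hfg)

-- A polynomial of higher degree makes the truncation error uniformly small.
lemma tendsto_map_truncate (hΛ : ∀ f, 0 ≤ f → 0 ≤ Λ f) (f : polyBounded) :
    Tendsto (fun n => Λ (ofCompactlySupported (truncate f n))) atTop (nhds (Λ f)) := by
  obtain ⟨q, hq⟩ := f.2.2
  set e := ofPolynomial (q * (1 + X ^ 2))
  have herror (n : ℕ) (x : ℝ) : |truncate f n x - f.1 x| ≤ ((1 / ((n : ℝ) + 1)) • e).1 x := by
    refine (abs_truncate_sub_le f n x).trans ?_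
    change _ ≤ 1 / ((n : ℝ) + 1) * (q * (1 + X ^ 2)).eval x
    simp only [eval_mul, eval_add, eval_one, eval_pow, eval_X]
    gcongr
    exact hq x
  have hbound : Tendsto (fun n : ℕ => 1 / ((n : ℝ) + 1) * Λ e) atTop (nhds 0) := by
    simpa using (tendsto_one_div_add_atTop_nhds_zero_nat (𝕜 := ℝ)).mul_const (Λ e)
  rw [tendsto_iff_norm_sub_tendsto_zero]
  refine squeeze_zero (fun _ => norm_nonneg _) (fun n => ?_) hbound
  rw [← map_sub, ← smul_eq_mul, ← map_smul, Real.norm_eq_abs, abs_le, ← map_neg]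
  exact ⟨map_le_map hΛ fun x => (abs_le.1 (herror n x)).1,
    map_le_map hΛ fun x => (abs_le.1 (herror n x)).2⟩

lemma integrable_of_integral_eq (hΛ : ∀ f, 0 ≤ f → 0 ≤ Λ f) {ν : Measure ℝ}
    [IsFiniteMeasureOnCompacts ν] (hν : ∀ g, ∫ x, g x ∂ν = Λ (ofCompactlySupported g))
    (f : polyBounded) : Integrable f.1 ν := by
  obtain ⟨q, hq⟩ := f.2.2
  have hint (g : CompactlySupportedContinuousMap ℝ ℝ) : Integrable g ν :=
    g.continuous.integrable_of_hasCompactSupport g.hasCompactSupport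
  have hbound (n : ℕ) : ∫⁻ x, ‖truncate f n x‖ₑ ∂ν ≤ ENNReal.ofReal (Λ (ofPolynomial q)) := by
    rw [← ofReal_integral_norm_eq_lintegral_enorm (hint _)]
    refine ENNReal.ofReal_le_ofReal ?_
    have hq_nonneg (x : ℝ) : 0 ≤ q.eval x := (abs_nonneg _).trans (hq x)
    calc ∫ x, ‖truncate f n x‖ ∂ν ≤ ∫ x, truncate (ofPolynomial q) n x ∂ν := by
          refine integral_mono (hint _).norm (hint _) fun x => ?_
          rw [Real.norm_eq_abs, truncate_apply, abs_mul, abs_of_nonneg (tent_nonneg n x)]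
          exact mul_le_mul_of_nonneg_right (hq x) (tent_nonneg n x)
      _ = Λ (ofCompactlySupported (truncate (ofPolynomial q) n)) := hν _
      _ ≤ Λ (ofPolynomial q) :=
          map_le_map hΛ fun x => mul_le_of_le_one_right (hq_nonneg x) (tent_le_one n x)
  have hliminf := liminf_le_of_frequently_le' (Frequently.of_forall hbound (f := atTop))
  exact integrable_of_tendsto (ae_of_all _ (tendsto_truncate f))
    (fun n => (hint _).aestronglyMeasurable) (ne_top_of_le_ne_top ENNReal.ofReal_ne_top hliminf)

theorem exists_measure_integral_eq (hΛ : ∀ f, 0 ≤ f → 0 ≤ Λ f) :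
    ∃ ν : Measure ℝ, ∀ f : polyBounded, Integrable f.1 ν ∧ ∫ x, f.1 x ∂ν = Λ f := by
  let Λc : CompactlySupportedContinuousMap ℝ ℝ →ₚ[ℝ] ℝ :=
    PositiveLinearMap.mk₀ (Λ ∘ₗ ofCompactlySupported) fun g hg => hΛ _ hg
  have hν (g : CompactlySupportedContinuousMap ℝ ℝ) :
      ∫ x, g x ∂(RealRMK.rieszMeasure Λc) = Λ (ofCompactlySupported g) :=
    RealRMK.integral_rieszMeasure Λc g
  have hint := integrable_of_integral_eq hΛ hν
  refine ⟨RealRMK.rieszMeasure Λc, fun f => ⟨hint f, ?_⟩⟩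
  have hintegral : Tendsto (fun n => ∫ x, truncate f n x ∂(RealRMK.rieszMeasure Λc)) atTop
      (nhds (∫ x, f.1 x ∂(RealRMK.rieszMeasure Λc))) :=
    tendsto_integral_of_dominated_convergence (fun x => |f.1 x|)
      (fun n => (truncate f n).continuous.aestronglyMeasurable) (hint f).abs
      (fun n => ae_of_all _ (abs_truncate_le f n)) (ae_of_all _ (tendsto_truncate f))
  simp only [hν] at hintegral
  exact tendsto_nhds_unique hintegral (tendsto_map_truncate hΛ f)

end polyBounded

end PolynomiallyBounded

section Determinate

variable {μ : Measure ℝ}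

lemma integrable_eval_algebraMap {𝕜 : Type*} [RCLike 𝕜] (hμ : HasAllMoments μ) (q : 𝕜[X]) :
    Integrable (fun x : ℝ => q.eval (algebraMap ℝ 𝕜 x)) μ := by
  simp only [eval_eq_sum_range]
  refine integrable_finsetSum _ fun n _ => Integrable.const_mul ?_ _
  exact (hμ n).mono' (by fun_prop) (ae_of_all _ fun x => by simp)

/-- The functional `q ↦ ∫ q dμ` on the real polynomials. -/
def momentFunctional (hμ : HasAllMoments μ) : ℝ[X] →ₗ[ℝ] ℝ where
  toFun q := ∫ x, q.eval x ∂μ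
  map_add' p q := by
    simp only [eval_add]
    exact integral_add (integrable_eval_algebraMap hμ p) (integrable_eval_algebraMap hμ q)
  map_smul' c q := by
    simp only [eval_smul]
    exact integral_smul c _

lemma isGLB_momentFunctional_majorants (hμ : HasAllMoments μ) (hdet : IsDeterminate μ)
    (φ : polyBounded) :
    IsGLB (momentFunctional hμ '' {q | φ ≤ polyBounded.ofPolynomial q}) (∫ x, φ.1 x ∂μ) := by
  obtain ⟨Λ, hΛ_nonneg, hΛ_moment, hΛ_glb⟩ := exists_positive_extension_isGLB
    (L := momentFunctional hμ) (fun q hq => integral_nonneg hq)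
    polyBounded.exists_le_ofPolynomial φ
  obtain ⟨ν, hν⟩ := polyBounded.exists_measure_integral_eq hΛ_nonneg
  have hν_pow (n : ℕ) := hν (polyBounded.ofPolynomial (X ^ n))
  have hνμ : ν = μ := by
    refine hdet ν (fun n => ?_) fun n => ?_
    · simpa [polyBounded.ofPolynomial, abs_pow] using (hν_pow n).1.abs
    · simpa [polyBounded.ofPolynomial, hΛ_moment, momentFunctional] using
        (hν_pow n).2.trans (hΛ_moment _)
  rwa [← (hν φ).2, hνμ] at hΛ_glb

lemma exists_polynomial_sandwich (hμ : HasAllMoments μ) (hdet : IsDeterminate μ) (φ : polyBounded)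
    {ε : ℝ} (hε : 0 < ε) :
    ∃ q₁ q₂ : ℝ[X], (∀ x, q₁.eval x ≤ φ.1 x) ∧ (∀ x, φ.1 x ≤ q₂.eval x) ∧
      ∫ x, (q₂.eval x - q₁.eval x) ∂μ < ε := by
  obtain ⟨_, ⟨q₂, hq₂, rfl⟩, -, hq₂_lt⟩ :=
    (isGLB_momentFunctional_majorants hμ hdet φ).exists_between
      (lt_add_of_pos_right _ (half_pos hε))
  obtain ⟨_, ⟨q₁, hq₁, rfl⟩, -, hq₁_lt⟩ :=
    (isGLB_momentFunctional_majorants hμ hdet (-φ)).exists_between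
      (lt_add_of_pos_right _ (half_pos hε))
  have hneg : ∫ x, (-φ).1 x ∂μ = -∫ x, φ.1 x ∂μ := integral_neg _
  refine ⟨-q₁, q₂, fun x => ?_, hq₂, ?_⟩
  · rw [eval_neg]
    exact neg_le.1 (hq₁ x)
  · simp only [eval_neg, sub_neg_eq_add]
    have hadd : ∫ x, (q₂.eval x + q₁.eval x) ∂μ = momentFunctional hμ q₂ + momentFunctional hμ q₁ :=
      integral_add (integrable_eval_algebraMap hμ q₂) (integrable_eval_algebraMap hμ q₁)
    rw [hadd]
    linarith

lemma exists_eval_neg_I_eq_one_integral_norm_sq_lt (hμ : HasAllMoments μ) (hdet : IsDeterminate μ)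
    {ε : ℝ} (hε : 0 < ε) :
    ∃ p : ℂ[X], p.eval (-Complex.I) = 1 ∧ ∫ x : ℝ, ‖p.eval (x : ℂ)‖ ^ 2 ∂μ < ε := by
  let φ : polyBounded := ⟨fun x => (1 + x ^ 2)⁻¹,
    by fun_prop (disch := intro x; positivity), 1, fun x => by
      rw [abs_of_pos (by positivity), eval_one]
      exact inv_le_one_of_one_le₀ (by nlinarith)⟩
  obtain ⟨q₁, q₂, hq₁, hq₂, hgap⟩ :=
    exists_polynomial_sandwich hμ hdet φ (ε := ε / 4) (by positivity)
  obtain ⟨p, hpI, hp⟩ := exists_eval_neg_I_eq_one_norm_sq_eval_le hq₁ hq₂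
  refine ⟨p, hpI, ?_⟩
  have hint : Integrable (fun x => 4 * (q₂.eval x - q₁.eval x)) μ :=
    ((integrable_eval_algebraMap hμ q₂).sub
      (integrable_eval_algebraMap hμ q₁)).const_mul 4
  calc ∫ x : ℝ, ‖p.eval (x : ℂ)‖ ^ 2 ∂μ ≤ ∫ x, 4 * (q₂.eval x - q₁.eval x) ∂μ :=
        integral_mono_of_nonneg (ae_of_all _ fun x => by positivity) hint (ae_of_all _ hp)
    _ < ε := by
        rw [integral_const_mul]
        linarith

end Determinate

section SeparatingAlgebra

open BoundedContinuousFunction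

variable {𝕜 E : Type*} [RCLike 𝕜] [MeasurableSpace E] [TopologicalSpace E] [PolishSpace E]
  [BorelSpace E] {ν : Measure E} {A : StarSubalgebra 𝕜 (E →ᵇ 𝕜)}

lemma ae_eq_zero_of_forall_mem_integral_smul_eq_zero
    (hA : (A.map (toContinuousMapStarₐ 𝕜)).SeparatesPoints) {g : E → ℝ} (hg : Integrable g ν)
    (hzero : ∀ a ∈ A, ∫ x, g x • a x ∂ν = 0) : g =ᵐ[ν] 0 := by
  have hpos_meas : AEMeasurable (fun x => ENNReal.ofReal (g x)) ν :=
    hg.1.aemeasurable.ennreal_ofReal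
  have hneg_meas : AEMeasurable (fun x => ENNReal.ofReal (-g x)) ν :=
    hg.neg.1.aemeasurable.ennreal_ofReal
  have := isFiniteMeasure_withDensity_ofReal hg.2
  have := isFiniteMeasure_withDensity_ofReal hg.neg.2
  have hparts : ν.withDensity (fun x => ENNReal.ofReal (g x)) =
      ν.withDensity fun x => ENNReal.ofReal (-g x) := by
    refine ext_of_forall_mem_subalgebra_integral_eq_of_polish hA fun a ha => ?_
    have hint {f : E → ℝ} (hf : Integrable f ν) : Integrable (fun x => f x • a x) ν :=
      hf.smul_bdd ‖a‖ a.continuous.aestronglyMeasurable (ae_of_all _ a.norm_coe_le_norm)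
    rw [integral_withDensity_eq_integral_toReal_smul₀ hpos_meas (by simp),
      integral_withDensity_eq_integral_toReal_smul₀ hneg_meas (by simp), ← sub_eq_zero]
    simp only [ENNReal.toReal_ofReal']
    rw [← integral_sub (hint hg.pos_part) (hint hg.neg_part)]
    simpa only [← sub_smul, max_zero_sub_max_neg_zero_eq_self] using hzero a ha
  have hfin : ∫⁻ x, ENNReal.ofReal (g x) ∂ν ≠ ⊤ := hg.lintegral_lt_top.ne
  filter_upwards [(withDensity_eq_iff hpos_meas hneg_meas hfin).1 hparts] with x hx
  have hmax := congrArg ENNReal.toReal hx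
  rw [ENNReal.toReal_ofReal', ENNReal.toReal_ofReal'] at hmax
  rw [← max_zero_sub_max_neg_zero_eq_self (g x), hmax, sub_self, Pi.zero_apply]

lemma ae_re_eq_zero_of_forall_mem_integral_mul_eq_zero
    (hA : (A.map (toContinuousMapStarₐ 𝕜)).SeparatesPoints) {h : E → 𝕜} (hh : Integrable h ν)
    (hzero : ∀ a ∈ A, ∫ x, a x * h x ∂ν = 0) : (fun x => RCLike.re (h x)) =ᵐ[ν] 0 := by
  refine ae_eq_zero_of_forall_mem_integral_smul_eq_zero hA hh.re fun a ha => ?_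
  have hint {f : E → 𝕜} (hf : Integrable f ν) : Integrable (fun x => a x * f x) ν :=
    hf.bdd_mul a.continuous.aestronglyMeasurable (ae_of_all _ a.norm_coe_le_norm)
  have hh_conj : Integrable (fun x => starRingEnd 𝕜 (h x)) ν :=
    RCLike.conjCLE.integrable_comp_iff.2 hh
  have hzero_conj : ∫ x, a x * starRingEnd 𝕜 (h x) ∂ν = 0 := by
    have hstar := congrArg (starRingEnd 𝕜) (hzero (star a) (star_mem ha))
    rw [← integral_conj, map_zero] at hstar
    simpa using hstar
  have hsplit (x : E) : RCLike.re (h x) • a x =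
      2⁻¹ * (a x * h x + a x * starRingEnd 𝕜 (h x)) := by
    rw [← mul_add, RCLike.add_conj, RCLike.real_smul_eq_coe_mul]
    ring
  simp only [hsplit]
  rw [integral_const_mul, integral_add (hint hh) (hint hh_conj), hzero a ha, hzero_conj, add_zero,
    mul_zero]

lemma ae_eq_zero_of_forall_mem_integral_mul_eq_zero
    (hA : (A.map (toContinuousMapStarₐ 𝕜)).SeparatesPoints) {h : E → 𝕜} (hh : Integrable h ν)
    (hzero : ∀ a ∈ A, ∫ x, a x * h x ∂ν = 0) : h =ᵐ[ν] 0 := by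
  have hzero_I (a) (ha : a ∈ A) : ∫ x, a x * (RCLike.I * h x) ∂ν = 0 := by
    simp only [mul_left_comm _ (RCLike.I : 𝕜)]
    rw [integral_const_mul, hzero a ha, mul_zero]
  filter_upwards [ae_re_eq_zero_of_forall_mem_integral_mul_eq_zero hA hh hzero,
    ae_re_eq_zero_of_forall_mem_integral_mul_eq_zero hA (hh.const_mul RCLike.I) hzero_I]
    with x hx_re hx_im
  rw [RCLike.I_mul_re, Pi.zero_apply, neg_eq_zero] at hx_im
  exact RCLike.ext (hx_re.trans (map_zero _).symm) (hx_im.trans (map_zero _).symm)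

end SeparatingAlgebra

section PolynomialAnnihilators

variable {ν : Measure ℝ} {h : ℝ → ℂ}

lemma memLp_two_eval (hν : HasAllMoments ν) (p : ℂ[X]) :
    MemLp (fun x : ℝ => p.eval (x : ℂ)) 2 ν := by
  rw [memLp_two_iff_integrable_sq_norm (by fun_prop)]
  have hsq := (integrable_eval_algebraMap hν (p * p.map (starRingEnd ℂ))).norm
  simpa [eval_map_conj, sq] using hsq

lemma integrable_eval_mul (hν : HasAllMoments ν) (hh : MemLp h 2 ν) (p : ℂ[X]) :
    Integrable (fun x : ℝ => p.eval (x : ℂ) * h x) ν :=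
  (memLp_two_eval hν p).integrable_mul hh

lemma enorm_integral_mul_le {α 𝕜 : Type*} [MeasurableSpace α] [RCLike 𝕜] {μ : Measure α}
    {f g : α → 𝕜} (hf : AEStronglyMeasurable f μ) (hg : AEStronglyMeasurable g μ) :
    ‖∫ x, f x * g x ∂μ‖ₑ ≤ eLpNorm f 2 μ * eLpNorm g 2 μ :=
  calc ‖∫ x, f x * g x ∂μ‖ₑ ≤ ∫⁻ x, ‖(f • g) x‖ₑ ∂μ := enorm_integral_le_lintegral_enorm _
    _ = eLpNorm (f • g) 1 μ := eLpNorm_one_eq_lintegral_enorm.symm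
    _ ≤ eLpNorm f 2 μ * eLpNorm g 2 μ := eLpNorm_smul_le_mul_eLpNorm hg hf

/-- Square-integrable functions whose product with every polynomial has integral zero: up to
complex conjugation, the orthogonal complement of the polynomials in `L²(ν)`. -/
def IsPolyAnnihilator (ν : Measure ℝ) (h : ℝ → ℂ) : Prop :=
  MemLp h 2 ν ∧ ∀ p : ℂ[X], ∫ x : ℝ, p.eval (x : ℂ) * h x ∂ν = 0

/-- The function `x ↦ (x - z)⁻¹` for nonreal `z`, as a bounded continuous function on `ℝ`. -/
def cauchyKernel (z : ℂ) (hz : z.im ≠ 0) : BoundedContinuousFunction ℝ ℂ :=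
  .ofNormedAddCommGroup (fun x : ℝ => ((x : ℂ) - z)⁻¹)
    (by
      refine Continuous.inv₀ (by fun_prop) fun x hx => hz ?_
      simpa using congrArg Complex.im hx)
    |z.im|⁻¹ fun x => by
      rw [norm_inv]
      refine inv_anti₀ (abs_pos.2 hz) ?_
      simpa using Complex.abs_im_le_norm ((x : ℂ) - z)

lemma sub_mul_cauchyKernel {z : ℂ} (hz : z.im ≠ 0) (x : ℝ) :
    ((x : ℂ) - z) * cauchyKernel z hz x = 1 := by
  refine mul_inv_cancel₀ fun hx => hz ?_
  simpa using congrArg Complex.im hx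

lemma memLp_two_boundedContinuous_mul (a : BoundedContinuousFunction ℝ ℂ) (hh : MemLp h 2 ν) :
    MemLp (fun x => a x * h x) 2 ν :=
  hh.of_le_mul (a.continuous.aestronglyMeasurable.mul hh.1) <| ae_of_all _ fun x => by
    rw [norm_mul]
    exact mul_le_mul_of_nonneg_right (a.norm_coe_le_norm x) (norm_nonneg _)

namespace IsPolyAnnihilator

lemma add (hν : HasAllMoments ν) {g : ℝ → ℂ} (hg : IsPolyAnnihilator ν g)
    (hh : IsPolyAnnihilator ν h) : IsPolyAnnihilator ν (fun x => g x + h x) := by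
  refine ⟨hg.1.add hh.1, fun p => ?_⟩
  simp only [mul_add]
  rw [integral_add (integrable_eval_mul hν hg.1 p) (integrable_eval_mul hν hh.1 p), hg.2, hh.2,
    add_zero]

lemma const_mul (hh : IsPolyAnnihilator ν h) (c : ℂ) : IsPolyAnnihilator ν (fun x => c * h x) := by
  refine ⟨hh.1.const_mul c, fun p => ?_⟩
  simp only [mul_left_comm _ c]
  rw [integral_const_mul, hh.2, mul_zero]

lemma conj (hh : IsPolyAnnihilator ν h) : IsPolyAnnihilator ν (fun x => starRingEnd ℂ (h x)) := by
  refine ⟨hh.1.star, fun p => ?_⟩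
  have hstar := congrArg (starRingEnd ℂ) (hh.2 (p.map (starRingEnd ℂ)))
  rw [← integral_conj, map_zero] at hstar
  simpa [eval_map_conj] using hstar

lemma integral_mul_eq_zero_of_tendsto (hν : HasAllMoments ν) (hh : IsPolyAnnihilator ν h)
    {f : ℝ → ℂ} (hf : MemLp f 2 ν) {s : ℕ → ℂ[X]}
    (hs : Tendsto (fun n => eLpNorm (fun x : ℝ => f x - (s n).eval (x : ℂ)) 2 ν) atTop (nhds 0)) :
    ∫ x, f x * h x ∂ν = 0 := by
  have hbound (n : ℕ) : ‖∫ x, f x * h x ∂ν‖ₑ ≤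
      eLpNorm (fun x : ℝ => f x - (s n).eval (x : ℂ)) 2 ν * eLpNorm h 2 ν := by
    have hfh : Integrable (fun x => f x * h x) ν := hf.integrable_mul hh.1
    have hdiff : ∫ x, f x * h x ∂ν = ∫ x, (f x - (s n).eval (x : ℂ)) * h x ∂ν := by
      simp only [sub_mul]
      rw [integral_sub hfh (integrable_eval_mul hν hh.1 _), hh.2, sub_zero]
    rw [hdiff]
    exact enorm_integral_mul_le (hf.sub (memLp_two_eval hν (s n))).1 hh.1.1
  have hlim := ENNReal.Tendsto.mul_const hs (.inr hh.1.2.ne)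
  rw [zero_mul] at hlim
  exact enorm_eq_zero.1 (le_zero_iff.1 (ge_of_tendsto' hlim hbound))

variable {z : ℂ} (hz : z.im ≠ 0) {s : ℕ → ℂ[X]}

lemma cauchyKernel_mul (hν : HasAllMoments ν)
    (hs : Tendsto (fun n => eLpNorm (fun x : ℝ => cauchyKernel z hz x - (s n).eval (x : ℂ)) 2 ν)
      atTop (nhds 0)) (hh : IsPolyAnnihilator ν h) :
    IsPolyAnnihilator ν (fun x => cauchyKernel z hz x * h x) := by
  have hmem := memLp_two_boundedContinuous_mul (cauchyKernel z hz) hh.1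
  have hkernel : MemLp (cauchyKernel z hz) 2 ν := by
    simpa using memLp_two_boundedContinuous_mul (cauchyKernel z hz) (memLp_two_eval hν 1)
  have hint : Integrable (fun x => cauchyKernel z hz x * h x) ν := hkernel.integrable_mul hh.1
  refine ⟨hmem, fun p => ?_⟩
  obtain ⟨q, hq⟩ : X - C z ∣ p - C (p.eval z) := X_sub_C_dvd_sub_C_eval
  have hsplit (x : ℝ) : p.eval (x : ℂ) * (cauchyKernel z hz x * h x) =
      q.eval (x : ℂ) * h x + p.eval z * (cauchyKernel z hz x * h x) := by
    have hqx : p.eval (x : ℂ) - p.eval z = ((x : ℂ) - z) * q.eval (x : ℂ) := by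
      simpa using congrArg (eval (x : ℂ)) hq
    linear_combination cauchyKernel z hz x * h x * hqx +
      q.eval (x : ℂ) * h x * sub_mul_cauchyKernel hz x
  simp only [hsplit]
  rw [integral_add (integrable_eval_mul hν hh.1 q) (hint.const_mul _),
    integral_const_mul, hh.2, integral_mul_eq_zero_of_tendsto hν hh hkernel hs, mul_zero, add_zero]

lemma mem_adjoin_mul (hν : HasAllMoments ν)
    (hs : Tendsto (fun n => eLpNorm (fun x : ℝ => cauchyKernel z hz x - (s n).eval (x : ℂ)) 2 ν)
      atTop (nhds 0)) {a : BoundedContinuousFunction ℝ ℂ}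
    (ha : a ∈ StarAlgebra.adjoin ℂ {cauchyKernel z hz}) (hh : IsPolyAnnihilator ν h) :
    IsPolyAnnihilator ν (fun x => a x * h x) := by
  induction ha using StarAlgebra.adjoin_induction generalizing h with
  | mem a ha =>
    rw [Set.mem_singleton_iff.1 ha]
    exact hh.cauchyKernel_mul hz hν hs
  | algebraMap c => simpa using hh.const_mul c
  | add a b _ _ iha ihb => simpa [add_mul] using (iha hh).add hν (ihb hh)
  | mul a b _ _ iha ihb => simpa [mul_assoc] using iha (ihb hh)
  | star a _ iha => simpa using (iha hh.conj).conj

lemma ae_eq_zero (hν : HasAllMoments ν)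
    (hs : Tendsto (fun n => eLpNorm (fun x : ℝ => cauchyKernel z hz x - (s n).eval (x : ℂ)) 2 ν)
      atTop (nhds 0)) (hh : IsPolyAnnihilator ν h) : h =ᵐ[ν] 0 := by
  have hint : Integrable h ν := by simpa using integrable_eval_mul hν hh.1 1
  refine ae_eq_zero_of_forall_mem_integral_mul_eq_zero
    (A := StarAlgebra.adjoin ℂ {cauchyKernel z hz}) (fun x y hxy => ?_) hint fun a ha => ?_
  · refine ⟨_, ⟨_, ⟨_, StarAlgebra.self_mem_adjoin_singleton ℂ (cauchyKernel z hz), rfl⟩, rfl⟩,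
      fun heq => hxy ?_⟩
    simpa using inv_injective heq
  · simpa using (hh.mem_adjoin_mul hz hν hs ha).2 1

end IsPolyAnnihilator

/-- The polynomials in `L²(ν)`. -/
def polyLp (ν : Measure ℝ) : Submodule ℂ (Lp ℂ 2 ν) where
  carrier := {f | ∃ p : ℂ[X], ⇑f =ᵐ[ν] fun x : ℝ => p.eval (x : ℂ)}
  zero_mem' := ⟨0, by
    filter_upwards [Lp.coeFn_zero ℂ 2 ν] with x hx
    rw [hx, Pi.zero_apply, eval_zero]⟩
  add_mem' := by
    rintro f g ⟨p, hp⟩ ⟨q, hq⟩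
    refine ⟨p + q, ?_⟩
    filter_upwards [Lp.coeFn_add f g, hp, hq] with x hx hpx hqx
    rw [hx, Pi.add_apply, hpx, hqx, eval_add]
  smul_mem' := by
    rintro c f ⟨p, hp⟩
    refine ⟨c • p, ?_⟩
    filter_upwards [Lp.coeFn_smul c f, hp] with x hx hpx
    rw [hx, Pi.smul_apply, hpx, eval_smul]

lemma isPolyAnnihilator_of_mem_orthogonal (hν : HasAllMoments ν) {h : Lp ℂ 2 ν}
    (hh : h ∈ (polyLp ν)ᗮ) : IsPolyAnnihilator ν h := by
  refine ⟨Lp.memLp h, fun p => ?_⟩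
  have hmem := memLp_two_eval hν (p.map (starRingEnd ℂ))
  have hinner := hh (hmem.toLp _) ⟨_, hmem.coeFn_toLp⟩
  rw [L2.inner_def] at hinner
  rw [← hinner]
  refine integral_congr_ae ?_
  filter_upwards [hmem.coeFn_toLp] with x hx
  rw [hx, eval_map_conj]
  simp [mul_comm]

lemma polyDense_of_forall_isPolyAnnihilator (hν : HasAllMoments ν)
    (hzero : ∀ h, IsPolyAnnihilator ν h → h =ᵐ[ν] 0) : PolyDense ν := by
  change Dense (polyLp ν : Set (Lp ℂ 2 ν))
  rw [Submodule.dense_iff_topologicalClosure_eq_top, Submodule.topologicalClosure_eq_top_iff,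
    Submodule.eq_bot_iff]
  exact fun h hh =>
    Lp.eq_zero_iff_ae_eq_zero.2 (hzero h (isPolyAnnihilator_of_mem_orthogonal hν hh))

end PolynomialAnnihilators

section WeightedMeasure

lemma eLpNorm_two_le_of_le_withDensity {α E F : Type*} [MeasurableSpace α] [ENorm E] [ENorm F]
    {μ ν : Measure α} {w : α → ENNReal} (hw : Measurable w) (hν : ν ≤ μ.withDensity w)
    {f : α → E} {g : α → F} (hfg : ∀ x, w x * ‖f x‖ₑ ^ 2 ≤ ‖g x‖ₑ ^ 2) :
    eLpNorm f 2 ν ≤ eLpNorm g 2 μ := by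
  simp only [eLpNorm_eq_lintegral_rpow_enorm_toReal two_ne_zero ENNReal.ofNat_ne_top,
    ENNReal.toReal_ofNat, ENNReal.rpow_ofNat]
  refine ENNReal.rpow_le_rpow ?_ (by norm_num)
  calc ∫⁻ x, ‖f x‖ₑ ^ 2 ∂ν ≤ ∫⁻ x, ‖f x‖ₑ ^ 2 ∂(μ.withDensity w) := lintegral_mono' hν le_rfl
    _ ≤ ∫⁻ x, w x * ‖f x‖ₑ ^ 2 ∂μ := lintegral_withDensity_le_lintegral_mul μ hw _
    _ ≤ ∫⁻ x, ‖g x‖ₑ ^ 2 ∂μ := lintegral_mono hfg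

variable {μ ν : Measure ℝ}

lemma hasAllMoments_of_le_withDensity (hμ : HasAllMoments μ)
    (hν : ν ≤ μ.withDensity fun x => ENNReal.ofReal (1 + x ^ 2)) : HasAllMoments ν := by
  refine fun n => Integrable.mono_measure ?_ hν
  rw [integrable_withDensity_iff_integrable_smul' (by fun_prop) (by simp)]
  refine ((hμ n).add (hμ (n + 2))).congr (ae_of_all _ fun x => ?_)
  simp only [Pi.add_apply, smul_eq_mul]
  rw [ENNReal.toReal_ofReal (by positivity), ← sq_abs x]
  ring

lemma exists_eval_neg_I_eq_one_tendsto_eLpNorm (hμ : HasAllMoments μ) (hdet : IsDeterminate μ) :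
    ∃ p : ℕ → ℂ[X], (∀ n, (p n).eval (-Complex.I) = 1) ∧
      Tendsto (fun n => eLpNorm (fun x : ℝ => (p n).eval (x : ℂ)) 2 μ) atTop (nhds 0) := by
  choose p hpI hp using fun n : ℕ =>
    exists_eval_neg_I_eq_one_integral_norm_sq_lt hμ hdet (Nat.one_div_pos_of_nat (α := ℝ) (n := n))
  refine ⟨p, hpI, ?_⟩
  have hint : Tendsto (fun n => ∫ x : ℝ, ‖(p n).eval (x : ℂ)‖ ^ 2 ∂μ) atTop (nhds 0) :=
    squeeze_zero (fun n => integral_nonneg fun x => by positivity) (fun n => (hp n).le)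
      tendsto_one_div_add_atTop_nhds_zero_nat
  have hsqrt := ENNReal.tendsto_ofReal hint.sqrt
  rw [Real.sqrt_zero, ENNReal.ofReal_zero] at hsqrt
  refine hsqrt.congr fun n => ?_
  rw [(memLp_two_eval hμ (p n)).eLpNorm_eq_integral_rpow_norm two_ne_zero ENNReal.ofNat_ne_top]
  simp [Real.sqrt_eq_rpow]

lemma exists_tendsto_eLpNorm_cauchyKernel_sub_eval (hμ : HasAllMoments μ) (hdet : IsDeterminate μ)
    (hν : ν ≤ μ.withDensity fun x => ENNReal.ofReal (1 + x ^ 2)) (hI : (-Complex.I).im ≠ 0) :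
    ∃ s : ℕ → ℂ[X], Tendsto
      (fun n => eLpNorm (fun x : ℝ => cauchyKernel (-Complex.I) hI x - (s n).eval (x : ℂ)) 2 ν)
      atTop (nhds 0) := by
  obtain ⟨p, hpI, hp⟩ := exists_eval_neg_I_eq_one_tendsto_eLpNorm hμ hdet
  have hdvd (n : ℕ) : X - C (-Complex.I) ∣ 1 - p n := dvd_iff_isRoot.2 (by simp [hpI n])
  choose s hs using hdvd
  refine ⟨s, tendsto_of_tendsto_of_tendsto_of_le_of_le tendsto_const_nhds hp (fun _ => zero_le)
    fun n => eLpNorm_two_le_of_le_withDensity (by fun_prop) hν fun x => le_of_eq ?_⟩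
  have hsx : 1 - (p n).eval (x : ℂ) = ((x : ℂ) - -Complex.I) * (s n).eval (x : ℂ) := by
    simpa using congrArg (eval (x : ℂ)) (hs n)
  have hpx : (p n).eval (x : ℂ) =
      ((x : ℂ) - -Complex.I) * (cauchyKernel _ hI x - (s n).eval (x : ℂ)) := by
    rw [mul_sub, sub_mul_cauchyKernel, ← hsx, sub_sub_cancel]
  have hnorm : 1 + x ^ 2 = ‖(x : ℂ) - -Complex.I‖ ^ 2 := by
    simp [norm_ofReal_sub_sq (z := -Complex.I), -sub_neg_eq_add, add_comm]
  rw [hpx, enorm_mul, mul_pow, hnorm, ENNReal.ofReal_pow (norm_nonneg _), ofReal_norm]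

end WeightedMeasure

theorem stmt14_general {μ ν : Measure ℝ} (hμ : HasAllMoments μ) (hdet : IsDeterminate μ)
    (hν : ν ≤ μ.withDensity fun x => ENNReal.ofReal (1 + x ^ 2)) : PolyDense ν := by
  have hν_mom := hasAllMoments_of_le_withDensity hμ hν
  obtain ⟨s, hs⟩ := exists_tendsto_eLpNorm_cauchyKernel_sub_eval hμ hdet hν (by simp)
  exact polyDense_of_forall_isPolyAnnihilator hν_mom fun h hh => hh.ae_eq_zero _ hν_mom hs

theorem stmt14 (μ : Measure ℝ) (hmom : HasAllMoments μ) (hinf : (mSupp μ).Infinite)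
    (hdet : IsDeterminate μ) (hsupp : mSupp μ ⊆ Set.Ici (0 : ℝ)) :
    ∀ k : ℕ, k ≤ 2 → PolyDense (μ.withDensity fun x => ENNReal.ofReal (x ^ k)) := by
  refine fun k hk => stmt14_general hmom hdet (withDensity_mono (ae_of_all _ fun x => ?_))
  refine ENNReal.ofReal_le_ofReal ?_
  interval_cases k <;> nlinarith [sq_nonneg (x - 1)]
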